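/- Let L be a nilpotent symplectic alternating algebra over a field 𝔽. Then the rank of L satisfies r(L) = dim L − dim L² = dim Z(L). In particular, if L ≠ {0} then dim Z(L) ≥ 2. -/

import Mathlib

/-!
The identity `(x·y, w) = (y·w, x)` together with nondegeneracy turns the condition `x·L = 0` into
orthogonality to `L²`, so `Z(L) = (L²)^⊥` has dimension `dim L - dim L²`.

Nilpotency makes `L²` behave like the Frattini subalgebra: a set generates `L` as soon as it spans
`L` modulo `L²`. Indeed, if `M` is a subalgebra with `Lⁿ + M = L`, then
`L² = (Lⁿ + M)·(Lⁿ + M) ⊆ Lⁿ⁺¹ + M`, so `L² + M = L` propagates to `Lⁿ + M = L` for all `n`.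
Conversely, every subspace containing `L²` is a subalgebra. Hence the rank is `dim L/L²`.

A single element `x` only generates its own span, because `x·x = 0`, and the alternating form
vanishes on a line; so a nonzero `L` needs at least two generators.
-/

variable {𝔽 : Type*} [Field 𝔽] {L : Type*} [AddCommGroup L] [Module 𝔽 L]

structure SymplecticAlternatingAlgebra (𝔽 L : Type*) [Field 𝔽] [AddCommGroup L]
    [Module 𝔽 L] where
  form : L →ₗ[𝔽] L →ₗ[𝔽] 𝔽
  mul : L →ₗ[𝔽] L →ₗ[𝔽] L
  form_alt : ∀ x, form x x = 0
  form_nondeg : ∀ x, (∀ y, form x y = 0) → x = 0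
  mul_alt : ∀ x, mul x x = 0
  compat : ∀ u v w, form (mul u v) w = form (mul v w) u

namespace SymplecticAlternatingAlgebra

variable (S : SymplecticAlternatingAlgebra 𝔽 L)

/-- `U·V`, the span of all products `u·v`. -/
def prodSub (U V : Submodule 𝔽 L) : Submodule 𝔽 L := Submodule.map₂ S.mul U V

/-- An ideal: `I·L ⊆ I`. -/
def IsIdeal (I : Submodule 𝔽 L) : Prop := S.prodSub I ⊤ ≤ I

/-- Orthogonal complement with respect to the form. -/
def perp (U : Submodule 𝔽 L) : Submodule 𝔽 L where
  carrier := {x | ∀ u ∈ U, S.form x u = 0}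
  add_mem' := by
    intro a b ha hb u hu
    simp [map_add, ha u hu, hb u hu]
  zero_mem' := by
    intro u hu
    simp
  smul_mem' := by
    intro c a ha u hu
    simp [ha u hu]

/-- `lcs n = L^(n+1)`: the lower central series, `lcs 0 = L¹ = L`. -/
def lcs : ℕ → Submodule 𝔽 L
  | 0 => ⊤
  | n + 1 => S.prodSub (lcs n) ⊤

/-- `ucs n = Z_n(L)`: the upper central series. -/
def ucs : ℕ → Submodule 𝔽 L
  | 0 => ⊥
  | n + 1 => ⨅ y : L, (ucs n).comap (S.mul.flip y)

/-- The center `Z(L)`. -/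
def center : Submodule 𝔽 L := ⨅ y : L, LinearMap.ker (S.mul.flip y)

/-- Nilpotency: some term of the lower central series vanishes. -/
def IsNilpotent : Prop := ∃ n, S.lcs n = ⊥

/-- `s` generates `L` as an algebra: the smallest subspace containing `s`
and closed under the multiplication is `L` itself. -/
def Generates (s : Set L) : Prop :=
  ∀ M : Submodule 𝔽 L, s ⊆ (M : Set L) → S.prodSub M M ≤ M → M = ⊤

end SymplecticAlternatingAlgebra

open SymplecticAlternatingAlgebra Module

section LinearAlgebra

lemma map₂_span_singleton_self_of_isAlt {R M N : Type*} [CommSemiring R] [AddCommMonoid M]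
    [Module R M] [AddCommMonoid N] [Module R N] {f : M →ₗ[R] M →ₗ[R] N} (hf : f.IsAlt) (x : M) :
    Submodule.map₂ f (Submodule.span R {x}) (Submodule.span R {x}) = ⊥ := by
  rw [Submodule.map₂_span_span, Set.image2_singleton, hf x, Submodule.span_zero_singleton]

variable {R M N : Type*} [CommRing R] [AddCommMonoid M] [Module R M] [AddCommGroup N] [Module R N]
  {f : M →ₗ[R] M →ₗ[R] N}

lemma map₂_comm_of_isAlt (hf : f.IsAlt) (p q : Submodule R M) :
    Submodule.map₂ f p q = Submodule.map₂ f q p := by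
  have hle (p q : Submodule R M) : Submodule.map₂ f p q ≤ Submodule.map₂ f q p :=
    Submodule.map₂_le.2 fun x hx y hy =>
      hf.neg y x ▸ neg_mem (Submodule.apply_mem_map₂ f hy hx)
  exact (hle p q).antisymm (hle q p)

lemma map₂_sup_self_of_isAlt (hf : f.IsAlt) (p q : Submodule R M) :
    Submodule.map₂ f (p ⊔ q) (p ⊔ q) = Submodule.map₂ f p (p ⊔ q) ⊔ Submodule.map₂ f q q := by
  rw [Submodule.map₂_sup_left, Submodule.map₂_sup_right f q, Submodule.map₂_sup_right f p,
    map₂_comm_of_isAlt hf q p, sup_assoc, sup_assoc, ← sup_assoc (Submodule.map₂ f p q), sup_idem]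

lemma isLeast_card_sup_span_eq_top {K V : Type*} [DivisionRing K] [AddCommGroup V] [Module K V]
    (W : Submodule K V) [FiniteDimensional K (V ⧸ W)] :
    IsLeast {r : ℕ | ∃ s : Finset V, W ⊔ Submodule.span K ↑s = ⊤ ∧ s.card = r}
      (finrank K (V ⧸ W)) := by
  classical
  simp only [← Submodule.map_mkQ_eq_top, Submodule.map_span]
  constructor
  · let b := finBasis K (V ⧸ W)
    choose v hv using fun i => W.mkQ_surjective (b i)
    have hv_inj : Function.Injective v :=
      .of_comp (f := W.mkQ) (by simpa only [Function.comp_def, hv] using b.injective)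
    refine ⟨Finset.univ.map ⟨v, hv_inj⟩, ?_, by simp⟩
    simp only [Finset.coe_map, Function.Embedding.coeFn_mk, Finset.coe_univ, Set.image_univ,
      ← Set.range_comp, Function.comp_def, hv, b.span_eq]
  · rintro _ ⟨s, hs, rfl⟩
    calc finrank K (V ⧸ W)
        = ((s.image W.mkQ : Finset (V ⧸ W)) : Set (V ⧸ W)).finrank K := by
          rw [Set.finrank, Finset.coe_image, hs, finrank_top]
      _ ≤ (s.image W.mkQ).card := finrank_span_finset_le_card _
      _ ≤ s.card := Finset.card_image_le

end LinearAlgebra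

namespace SymplecticAlternatingAlgebra

variable (S : SymplecticAlternatingAlgebra 𝔽 L)

lemma isAlt_form : S.form.IsAlt := S.form_alt

lemma isAlt_mul : S.mul.IsAlt := S.mul_alt

lemma nondegenerate_form : S.form.Nondegenerate :=
  S.isAlt_form.isRefl.nondegenerate_iff_separatingLeft.2 S.form_nondeg

lemma mem_perp_iff_le_ker {U : Submodule 𝔽 L} {x : L} :
    x ∈ S.perp U ↔ U ≤ LinearMap.ker (S.form x) :=
  Iff.rfl

lemma perp_eq_orthogonal (U : Submodule 𝔽 L) :
    S.perp U = LinearMap.BilinForm.orthogonal S.form U := by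
  ext x
  exact forall₂_congr fun u _ => S.isAlt_form.eq_iff

lemma finrank_perp [FiniteDimensional 𝔽 L] (U : Submodule 𝔽 L) :
    finrank 𝔽 (S.perp U) = finrank 𝔽 L - finrank 𝔽 U := by
  rw [perp_eq_orthogonal, LinearMap.BilinForm.finrank_orthogonal S.nondegenerate_form]

lemma mem_center {x : L} : x ∈ S.center ↔ ∀ y, S.mul x y = 0 := by
  simp only [center, Submodule.mem_iInf, LinearMap.mem_ker, LinearMap.flip_apply]

lemma lcs_one : S.lcs 1 = S.prodSub ⊤ ⊤ := rfl

lemma center_eq_perp_lcs_one : S.center = S.perp (S.lcs 1) := by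
  ext x
  calc x ∈ S.center
      ↔ ∀ y w, S.form (S.mul x y) w = 0 := by
        rw [mem_center]
        exact forall_congr' fun y => ⟨fun h w => by rw [h, LinearMap.map_zero₂], S.form_nondeg _⟩
    _ ↔ ∀ y w, S.form x (S.mul y w) = 0 := by
        simp only [S.compat x, S.isAlt_form.eq_iff (y := x)]
    _ ↔ x ∈ S.perp (S.lcs 1) := by
        simp [mem_perp_iff_le_ker, lcs_one, prodSub, Submodule.map₂_le]

lemma lcs_sup_eq_top {M : Submodule 𝔽 L} (hM : S.prodSub M M ≤ M) (h : S.lcs 1 ⊔ M = ⊤) (n : ℕ) :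
    S.lcs n ⊔ M = ⊤ := by
  induction n with
  | zero => exact top_sup_eq M
  | succ n ih =>
    have hle : S.lcs 1 ≤ S.lcs (n + 1) ⊔ M :=
      calc S.lcs 1
          = S.prodSub (S.lcs n ⊔ M) (S.lcs n ⊔ M) := by rw [ih, lcs_one]
        _ = S.prodSub (S.lcs n) (S.lcs n ⊔ M) ⊔ S.prodSub M M :=
          map₂_sup_self_of_isAlt S.isAlt_mul _ _
        _ ≤ S.lcs (n + 1) ⊔ M := sup_le_sup (Submodule.map₂_le_map₂_right le_top) hM
    exact top_le_iff.1 (h ▸ sup_le hle le_sup_right)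

lemma prodSub_self_le_of_lcs_one_le {M : Submodule 𝔽 L} (hM : S.lcs 1 ≤ M) :
    S.prodSub M M ≤ M :=
  (Submodule.map₂_le_map₂ le_top le_top).trans hM

variable {S} {s t : Set L}

lemma Generates.lcs_one_sup_span_eq_top (hs : S.Generates s) :
    S.lcs 1 ⊔ Submodule.span 𝔽 s = ⊤ :=
  hs _ (Submodule.span_le.1 le_sup_right) (S.prodSub_self_le_of_lcs_one_le le_sup_left)

lemma IsNilpotent.generates_iff (hnil : S.IsNilpotent) :
    S.Generates s ↔ S.lcs 1 ⊔ Submodule.span 𝔽 s = ⊤ := by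
  refine ⟨Generates.lcs_one_sup_span_eq_top, fun hs M hsM hM => ?_⟩
  obtain ⟨n, hn⟩ := hnil
  have hM_sup : S.lcs 1 ⊔ M = ⊤ :=
    top_le_iff.1 (hs ▸ sup_le_sup_left (Submodule.span_le.2 hsM) _)
  simpa [hn] using S.lcs_sup_eq_top hM hM_sup n

lemma Generates.mono (hs : S.Generates s) (hst : s ⊆ t) : S.Generates t :=
  fun M htM => hs M (hst.trans htM)

lemma Generates.span_singleton_eq_top {x : L} (hx : S.Generates {x}) :
    Submodule.span 𝔽 {x} = ⊤ := by
  refine hx _ Submodule.subset_span ?_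
  rw [prodSub, map₂_span_singleton_self_of_isAlt S.isAlt_mul]
  exact bot_le

lemma Generates.subsingleton_of_singleton {x : L} (hx : S.Generates {x}) : Subsingleton L := by
  have hform : Submodule.map₂ S.form ⊤ ⊤ = ⊥ :=
    hx.span_singleton_eq_top ▸ map₂_span_singleton_self_of_isAlt S.isAlt_form x
  refine subsingleton_of_forall_eq 0 fun u => S.form_nondeg u fun v => ?_
  rw [← Submodule.mem_bot 𝔽, ← hform]
  exact Submodule.apply_mem_map₂ _ Submodule.mem_top Submodule.mem_top

lemma Generates.two_le_card [Nontrivial L] {s : Finset L} (hs : S.Generates ↑s) : 2 ≤ s.card := by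
  by_contra! hcard
  obtain ⟨x, hsx⟩ := Finset.card_le_one_iff_subset_singleton.1 (Nat.lt_succ_iff.1 hcard)
  have hx : S.Generates {x} := hs.mono (by exact_mod_cast hsx)
  exact not_subsingleton L hx.subsingleton_of_singleton

end SymplecticAlternatingAlgebra

theorem rank_eq_finrank_center [FiniteDimensional 𝔽 L]
    (S : SymplecticAlternatingAlgebra 𝔽 L) (hnil : S.IsNilpotent) :
    IsLeast {r : ℕ | ∃ s : Finset L, S.Generates ↑s ∧ s.card = r}
      (Module.finrank 𝔽 L - Module.finrank 𝔽 (S.lcs 1)) ∧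
    Module.finrank 𝔽 L - Module.finrank 𝔽 (S.lcs 1) = Module.finrank 𝔽 S.center ∧
    (Nontrivial L → 2 ≤ Module.finrank 𝔽 S.center) := by
  have hrank : IsLeast {r : ℕ | ∃ s : Finset L, S.Generates ↑s ∧ s.card = r}
      (finrank 𝔽 L - finrank 𝔽 (S.lcs 1)) := by
    simpa only [hnil.generates_iff, Submodule.finrank_quotient]
      using isLeast_card_sup_span_eq_top (S.lcs 1)
  have hcenter : finrank 𝔽 L - finrank 𝔽 (S.lcs 1) = finrank 𝔽 S.center := by
    rw [S.center_eq_perp_lcs_one, S.finrank_perp]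
  refine ⟨hrank, hcenter, fun _ => ?_⟩
  obtain ⟨s, hs, hcard⟩ := hrank.1
  rw [← hcenter, ← hcard]
  exact hs.two_le_card
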